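/- Let k ≥ 3 and let M be a k-nestable ordered k-uniform matching with e ≥ 1 edges. Then M is contained in G_{2e−1}^k, i.e., there is an injective, order-preserving map from the vertices of M to the vertices of G_{2e−1}^k sending each edge of M to an edge of G_{2e−1}^k. -/

import Mathlib

/-- An ordered hypergraph with vertex set `{1, …, n}` (with its natural order)
and edges given as finite sets of vertices. -/
structure OrderedHypergraph where
  n : ℕ
  edges : Finset (Finset ℕ)

/-- An ordered hypergraph `G` is contained in an ordered hypergraph `H` if there is an
injective, order-preserving map from the vertices of `G` to the vertices of `H` such that
edges of `G` map to edges of `H`. -/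
def OrderedHypergraph.Contains (H G : OrderedHypergraph) : Prop :=
  ∃ f : ℕ → ℕ, StrictMono f ∧ (∀ v ∈ Finset.Icc 1 G.n, f v ∈ Finset.Icc 1 H.n) ∧
    ∀ A ∈ G.edges, A.image f ∈ H.edges

/-- The complete `k`-uniform ordered hypergraph `K_N^k` on the vertex set `{1, …, N}`. -/
def completeHG (k N : ℕ) : OrderedHypergraph :=
  ⟨N, Finset.powersetCard k (Finset.Icc 1 N)⟩

/-- The `i`-colored subgraph of `K_N^k` under the coloring `c`. -/
def coloredSubgraph (k N : ℕ) {t : ℕ} (c : Finset ℕ → Fin t) (i : Fin t) : OrderedHypergraph :=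
  ⟨N, (Finset.powersetCard k (Finset.Icc 1 N)).filter fun A => c A = i⟩

/-- The ordered Ramsey number `OR(G 0, …, G (t-1))` of `k`-uniform ordered hypergraphs:
the minimum `N` such that every `t`-coloring of the edges of `K_N^k` contains, for some
color `i`, a copy of `G i` in the `i`-colored subgraph. -/
noncomputable def ORnum (k : ℕ) {t : ℕ} (G : Fin t → OrderedHypergraph) : ℕ :=
  sInf {N | ∀ c : Finset ℕ → Fin t, ∃ i, (coloredSubgraph k N c i).Contains (G i)}

/-- The `(k,ℓ)`-path `P_e^{k,ℓ}` with `e` edges: the ordered `k`-uniform hypergraph on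
vertex set `{1, …, e(k-ℓ)+ℓ}` with edges `A_r = {(r-1)(k-ℓ)+1, …, (r-1)(k-ℓ)+k}`. -/
def loosePath (k l e : ℕ) : OrderedHypergraph :=
  ⟨e * (k - l) + l,
    (Finset.range e).image fun r => Finset.Icc (r * (k - l) + 1) (r * (k - l) + k)⟩


/-- The ordered `k`-uniform hypergraph `G_s^k`, defined iteratively: `G_0^k` is a single
vertex with no edges, and `G_{s+1}^k` (on vertex set `{1, …, k^{s+1}}`) consists of `k`
disjoint consecutive copies of `G_s^k` (copy `j` occupying `{j·k^s + 1, …, (j+1)·k^s}`)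
together with every `k`-element edge having exactly one vertex in each copy. -/
def iterGraph (k : ℕ) : ℕ → OrderedHypergraph
  | 0 => ⟨1, ∅⟩
  | s + 1 =>
      ⟨k ^ (s + 1),
        ((Finset.range k).biUnion fun j =>
            (iterGraph k s).edges.image fun A => A.image fun x => x + j * k ^ s) ∪
          (Finset.powersetCard k (Finset.Icc 1 (k ^ (s + 1)))).filter fun A =>
            ∀ j ∈ Finset.range k,
              (A ∩ Finset.Icc (j * k ^ s + 1) ((j + 1) * k ^ s)).card = 1⟩

/-- `M` is an ordered `k`-uniform matching: each edge is a `k`-element subset of the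
vertex set `{1, …, M.n}`, and the edges are pairwise disjoint. -/
def IsOrderedMatching (k : ℕ) (M : OrderedHypergraph) : Prop :=
  (∀ A ∈ M.edges, A.card = k ∧ A ⊆ Finset.Icc 1 M.n) ∧
    ∀ A ∈ M.edges, ∀ B ∈ M.edges, A ≠ B → Disjoint A B

/-- The support (vertex set) of a set of edges: the union of the edges. -/
def edgeSupport (E : Finset (Finset ℕ)) : Finset ℕ := E.sup id

/-- A set of edges `E` (of an ordered `k`-uniform matching) is `k`-nestable:  either it
is empty, or there are `k` disjoint consecutive intervals `I 0 < I 1 < ⋯ < I (k-1)` of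
the support (some possibly empty or degenerate) spanning the support, the first
containing the least vertex and the last containing the greatest vertex, such that every
edge is either contained in one of the intervals or has exactly one vertex in each
interval, and for each `j` the set of edges contained in `I j` is itself `k`-nestable. -/
inductive KNestable (k : ℕ) : Finset (Finset ℕ) → Prop where
  | empty : KNestable k ∅
  | nest (E : Finset (Finset ℕ)) (hk : 0 < k) (I : Fin k → Finset ℕ)
      (hord : ∀ j j' : Fin k, j < j' → ∀ x ∈ I j, ∀ y ∈ I j', x < y)
      (hspan : edgeSupport E = Finset.univ.biUnion fun j => I j)
      (hint : ∀ j : Fin k, ∀ x ∈ I j, ∀ y ∈ I j, ∀ z ∈ edgeSupport E,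
        x ≤ z → z ≤ y → z ∈ I j)
      (hfirst : ∀ x ∈ edgeSupport E, ∃ y ∈ I ⟨0, hk⟩, y ≤ x)
      (hlast : ∀ x ∈ edgeSupport E, ∃ y ∈ I ⟨k - 1, Nat.sub_lt hk Nat.one_pos⟩, x ≤ y)
      (hedges : ∀ A ∈ E, (∃ j, A ⊆ I j) ∨ ∀ j, (A ∩ I j).card = 1)
      (hrec : ∀ j : Fin k, KNestable k (E.filter fun A => A ⊆ I j)) :
      KNestable k E

/-!
Label the vertex `v` of `G_s^k` by `v - 1 < k ^ s` and read labels in base `k`. A set of vertices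
is an edge exactly when, for some `t < s`, its labels agree above digit `t` while digit `t` takes
each of the values `0, …, k - 1` once.

Appending a new last digit to all labels keeps every edge an edge and leaves room between any two
consecutive old vertices, so an isolated vertex can be added anywhere at the cost of one level.
Writing a new leading digit `j` in front of the labels of the `j`-th interval glues embeddings of
the intervals, again at the cost of one level, and the crossing edges become edges at that digit.

Now induct on nestability. If `I j` contains `m` of the `e` edges, then `m < e` because the first
and last intervals are nonempty, and at most `e - m` vertices of `I j` lie on crossing edges. Hence
`I j` embeds at level `(2m - 1) + (e - m) ≤ 2e - 2` if `m > 0`, and at level `e - 1 ≤ 2e - 2` if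
`m = 0`; gluing gives level `2e - 1`.
-/

section IterGraphEdges

variable {α : Type*} {k s t : ℕ} {f g : α → ℕ} {A : Finset α}

/-- In base `k`, the labels `f x` of the vertices `x ∈ A` agree above digit `t`, and digit `t`
takes each of the values `0, …, k - 1` exactly once. With `f v = v - 1`, the edges of
`iterGraph k s` are the sets of vertices that split at some digit `t < s`. -/
def SplitsAt (k : ℕ) (f : α → ℕ) (A : Finset α) (t : ℕ) : Prop :=
  (∀ x ∈ A, ∀ y ∈ A, f x / k ^ (t + 1) = f y / k ^ (t + 1)) ∧
    Set.BijOn (fun x => f x / k ^ t % k) A (Set.Iio k)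

theorem SplitsAt.of_div_eq (h : SplitsAt k f A t) (hfg : ∀ x ∈ A, g x / k = f x) :
    SplitsAt k g A (t + 1) := by
  have hdiv (i : ℕ) : ∀ x ∈ A, g x / k ^ (i + 1) = f x / k ^ i := fun x hx => by
    rw [pow_succ', ← Nat.div_div_eq_div_mul, hfg x hx]
  refine ⟨fun x hx y hy => ?_, h.2.congr fun x hx => ?_⟩
  · rw [hdiv _ x hx, hdiv _ y hy, h.1 x hx y hy]
  · simp only [hdiv t x hx]

theorem SplitsAt.of_mod_eq (h : SplitsAt k f A t) (ht : t < s)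
    (hmod : ∀ x ∈ A, g x % k ^ s = f x % k ^ s)
    (hdiv : ∀ x ∈ A, ∀ y ∈ A, g x / k ^ s = g y / k ^ s) : SplitsAt k g A t := by
  obtain ⟨r, rfl⟩ : ∃ r, s = t + 1 + r := Nat.exists_eq_add_of_le ht
  have hmid : ∀ x ∈ A, g x / k ^ (t + 1) % k ^ r = f x / k ^ (t + 1) % k ^ r := fun x hx => by
    rw [← Nat.mod_mul_right_div_self, ← Nat.mod_mul_right_div_self, ← pow_add, hmod x hx]
  have hdigit : ∀ x ∈ A, f x / k ^ t % k = g x / k ^ t % k := fun x hx => by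
    have hlow : f x % k ^ (t + 1) = g x % k ^ (t + 1) :=
      (Nat.ModEq.of_dvd (pow_dvd_pow k le_self_add) (hmod x hx)).symm
    rw [← Nat.mod_mul_right_div_self, ← Nat.mod_mul_right_div_self, ← pow_succ, hlow]
  refine ⟨fun x hx y hy => ?_, h.2.congr hdigit⟩
  rw [← Nat.div_add_mod (g x / k ^ (t + 1)) (k ^ r), ← Nat.div_add_mod (g y / k ^ (t + 1)) (k ^ r),
    Nat.div_div_eq_div_mul, Nat.div_div_eq_div_mul, ← pow_add, hdiv x hx y hy, hmid x hx,
    hmid y hy, h.1 x hx y hy]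

theorem splitsAt_of_card_inter_eq_one [DecidableEq α] {I : Fin k → Finset α}
    (hdiv : ∀ j, ∀ x ∈ I j, f x / k ^ s = j) (hA : A ⊆ Finset.univ.biUnion I)
    (hcard : ∀ j, (A ∩ I j).card = 1) : SplitsAt k f A s := by
  have hlead : ∀ x ∈ A, ∃ j, x ∈ I j ∧ f x / k ^ s = j := fun x hx => by
    obtain ⟨j, -, hj⟩ := Finset.mem_biUnion.1 (hA hx)
    exact ⟨j, hj, hdiv j x hj⟩
  have hlead_lt : ∀ x ∈ A, f x / k ^ s < k := fun x hx => by
    obtain ⟨j, -, hj⟩ := hlead x hx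
    exact hj ▸ j.isLt
  refine ⟨fun x hx y hy => ?_, Set.BijOn.congr ⟨hlead_lt, ?_, ?_⟩ fun x hx =>
    (Nat.mod_eq_of_lt (hlead_lt x hx)).symm⟩
  · rw [pow_succ, ← Nat.div_div_eq_div_mul, ← Nat.div_div_eq_div_mul,
      Nat.div_eq_of_lt (hlead_lt x hx), Nat.div_eq_of_lt (hlead_lt y hy)]
  · intro x hx y hy hxy
    obtain ⟨i, hxi, hi⟩ := hlead x hx
    obtain ⟨j, hyj, hj⟩ := hlead y hy
    obtain rfl : i = j := Fin.ext (hi.symm.trans (hxy.trans hj))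
    exact Finset.card_le_one.1 (hcard i).le x (Finset.mem_inter.2 ⟨hx, hxi⟩) y
      (Finset.mem_inter.2 ⟨hy, hyj⟩)
  · intro j hj
    obtain ⟨x, hx⟩ := Finset.card_pos.1 (Nat.one_pos.trans_eq (hcard ⟨j, hj⟩).symm)
    obtain ⟨hxA, hxj⟩ := Finset.mem_inter.1 hx
    exact ⟨x, hxA, hdiv ⟨j, hj⟩ x hxj⟩

theorem iterGraph_n (k s : ℕ) : (iterGraph k s).n = k ^ s := by
  cases s <;> rfl

theorem image_add_mem_edges_iterGraph {j : ℕ} (hj : j < k) {B : Finset ℕ}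
    (hB : B ∈ (iterGraph k s).edges) :
    B.image (· + j * k ^ s) ∈ (iterGraph k (s + 1)).edges :=
  Finset.mem_union_left _ <|
    Finset.mem_biUnion.2 ⟨j, Finset.mem_range.2 hj, Finset.mem_image_of_mem _ hB⟩

theorem image_succ_mem_edges_iterGraph_of_bijOn (hk : 0 < k)
    (h : Set.BijOn (fun x => f x / k ^ s) A (Set.Iio k)) :
    A.image (fun x => f x + 1) ∈ (iterGraph k (s + 1)).edges := by
  have hpos : 0 < k ^ s := pow_pos hk s
  have hlt : ∀ x ∈ A, f x < k ^ (s + 1) := fun x hx => by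
    rw [pow_succ']
    exact (Nat.div_lt_iff_lt_mul hpos).1 (h.mapsTo hx)
  have hinj : Set.InjOn (fun x => f x + 1) A := fun x hx y hy hxy =>
    h.injOn hx hy (congrArg (· / k ^ s) (Nat.succ_injective hxy))
  have hcard : A.card = k := by
    simpa using h.ncard_eq
  have hblock (x : α) (j : ℕ) :
      f x + 1 ∈ Finset.Icc (j * k ^ s + 1) ((j + 1) * k ^ s) ↔ f x / k ^ s = j := by
    rw [Finset.mem_Icc, Nat.div_eq_iff hpos, add_one_mul]
    omega
  refine Finset.mem_union_right _ <| Finset.mem_filter.2 ⟨Finset.mem_powersetCard.2 ⟨?_, ?_⟩, ?_⟩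
  · exact Finset.image_subset_iff.2 fun x hx => Finset.mem_Icc.2 ⟨Nat.succ_pos _, hlt x hx⟩
  · rw [Finset.card_image_of_injOn hinj, hcard]
  · intro j hj
    obtain ⟨x, hx, hxj⟩ := h.surjOn (Finset.mem_range.1 hj)
    refine Finset.card_eq_one.2 ⟨f x + 1, Finset.eq_singleton_iff_unique_mem.2 ⟨?_, ?_⟩⟩
    · exact Finset.mem_inter.2 ⟨Finset.mem_image_of_mem _ hx, (hblock x j).2 hxj⟩
    · simp only [Finset.mem_inter, Finset.mem_image]
      rintro _ ⟨⟨y, hy, rfl⟩, hyj⟩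
      rw [h.injOn hy hx (((hblock y j).1 hyj).trans hxj.symm)]

theorem SplitsAt.image_succ_mem_edges_iterGraph (hk : 0 < k) (ht : t < s)
    (hlt : ∀ x ∈ A, f x < k ^ s) (h : SplitsAt k f A t) :
    A.image (fun x => f x + 1) ∈ (iterGraph k s).edges := by
  induction s generalizing f with
  | zero => exact absurd ht t.not_lt_zero
  | succ s ih =>
    have hlead : ∀ x ∈ A, f x / k ^ s < k := fun x hx =>
      (Nat.div_lt_iff_lt_mul (pow_pos hk s)).2 (pow_succ' k s ▸ hlt x hx)
    rcases Nat.lt_succ_iff_lt_or_eq.1 ht with ht | rfl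
    · obtain ⟨x₀, hx₀, -⟩ := h.2.surjOn hk
      have hconst : ∀ x ∈ A, f x / k ^ s = f x₀ / k ^ s := fun x hx => by
        obtain ⟨r, rfl⟩ := Nat.exists_eq_add_of_le (Nat.succ_le_of_lt ht)
        rw [pow_add, ← Nat.div_div_eq_div_mul, h.1 x hx x₀ hx₀, Nat.div_div_eq_div_mul]
      have hmod_lt (x : α) : f x % k ^ s < k ^ s := Nat.mod_lt _ (pow_pos hk s)
      have hmod : SplitsAt k (fun x => f x % k ^ s) A t :=
        h.of_mod_eq ht (fun x _ => Nat.mod_mod _ _) fun x _ y _ => by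
          rw [Nat.div_eq_of_lt (hmod_lt x), Nat.div_eq_of_lt (hmod_lt y)]
      convert image_add_mem_edges_iterGraph (hlead x₀ hx₀) (ih ht (fun x _ => hmod_lt x) hmod)
        using 1
      rw [Finset.image_image]
      refine Finset.image_congr fun x hx => ?_
      rw [Function.comp_apply, ← hconst x hx, add_right_comm, Nat.mod_add_div']
    · exact image_succ_mem_edges_iterGraph_of_bijOn hk <|
        h.2.congr fun x hx => Nat.mod_eq_of_lt (hlead x hx)

end IterGraphEdges

section DisjointFamily

variable {ι α : Type*} {I : ι → Finset α}

theorem pairwise_disjoint_of_forall_lt [LinearOrder ι] [Preorder α]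
    (hI : ∀ i j, i < j → ∀ x ∈ I i, ∀ y ∈ I j, x < y) :
    Pairwise fun i j => Disjoint (I i) (I j) := fun i j hij =>
  Finset.disjoint_left.2 fun x hi hj =>
    hij.lt_or_gt.elim (fun h => (hI i j h x hi x hj).false) fun h => (hI j i h x hj x hi).false

theorem exists_forall_mem_eq_of_pairwise_disjoint {β : Type*} [Nonempty β]
    (hI : Pairwise fun i j => Disjoint (I i) (I j)) (f : ι → α → β) :
    ∃ F : α → β, ∀ j, ∀ x ∈ I j, F x = f j x := by
  have hvalue (x : α) : ∃ b, ∀ j, x ∈ I j → b = f j x := by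
    by_cases hx : ∃ i, x ∈ I i
    · obtain ⟨i, hi⟩ := hx
      refine ⟨f i x, fun j hj => ?_⟩
      rw [hI.eq (Finset.not_disjoint_iff.2 ⟨x, hi, hj⟩)]
    · exact ⟨Classical.arbitrary β, fun j hj => absurd ⟨j, hj⟩ hx⟩
  choose F hF using hvalue
  exact ⟨F, fun j x => hF x j⟩

theorem subset_or_card_inter_le_one [DecidableEq α]
    (hI : Pairwise fun i j => Disjoint (I i) (I j)) {A : Finset α}
    (hA : (∃ i, A ⊆ I i) ∨ ∀ j, (A ∩ I j).card = 1) (j : ι) :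
    A ⊆ I j ∨ (A ∩ I j).card ≤ 1 := by
  rcases hA with ⟨i, hi⟩ | hA
  · rcases eq_or_ne i j with rfl | hij
    · exact .inl hi
    · right
      rw [Finset.disjoint_iff_inter_eq_empty.1 ((hI hij).mono_left hi)]
      exact Nat.zero_le 1
  · exact .inr (hA j).le

end DisjointFamily

section IterEmbedding

variable {α : Type*} [Preorder α] {k s t : ℕ} {S : Finset α} {E : Finset (Finset α)}

/-- The labelling `f` embeds the ordered hypergraph with vertex set `S` and edge set `E` into
`iterGraph k s`, by sending the vertex `x` to the vertex `f x + 1`. Edges are required to split at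
a digit rather than to be mapped to members of `(iterGraph k s).edges`, so that the condition is
stable under changes of the labels. -/
structure IsIterEmbedding (k s : ℕ) (S : Finset α) (E : Finset (Finset α)) (f : α → ℕ) :
    Prop where
  strictMonoOn : StrictMonoOn f S
  lt_pow : ∀ x ∈ S, f x < k ^ s
  splits : ∀ A ∈ E, ∃ t < s, SplitsAt k f A t

/-- The ordered hypergraph with vertex set `S` and edge set `E` embeds into `iterGraph k s`. -/
def IterEmbeds (k s : ℕ) (S : Finset α) (E : Finset (Finset α)) : Prop :=
  ∃ f, IsIterEmbedding k s S E f

theorem IterEmbeds.mono (h : IterEmbeds k s S E) (hk : 0 < k) (hst : s ≤ t) :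
    IterEmbeds k t S E := by
  obtain ⟨f, hf⟩ := h
  exact ⟨f, hf.strictMonoOn, fun x hx => (hf.lt_pow x hx).trans_le (Nat.pow_le_pow_right hk hst),
    fun A hA => (hf.splits A hA).imp fun i hi => ⟨hi.1.trans_le hst, hi.2⟩⟩

theorem IsIterEmbedding.of_div_eq {f g : α → ℕ} (hf : IsIterEmbedding k s S E f) (hk : 0 < k)
    (hE : ∀ A ∈ E, A ⊆ S) (hfg : ∀ x ∈ S, g x / k = f x) : IsIterEmbedding k (s + 1) S E g where
  strictMonoOn x hx y hy hxy := by
    refine Nat.lt_of_div_lt_div (c := k) ?_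
    rw [hfg x hx, hfg y hy]
    exact hf.strictMonoOn hx hy hxy
  lt_pow x hx := by
    rw [pow_succ, ← Nat.div_lt_iff_lt_mul hk, hfg x hx]
    exact hf.lt_pow x hx
  splits A hA := by
    obtain ⟨t, ht, hsplit⟩ := hf.splits A hA
    exact ⟨t + 1, Nat.succ_lt_succ ht, hsplit.of_div_eq fun x hx => hfg x (hE A hA hx)⟩

end IterEmbedding

section IterEmbeddingConstructions

variable {α : Type*} [LinearOrder α] {k s : ℕ} {S : Finset α} {E : Finset (Finset α)}

theorem IsIterEmbedding.insert {f : α → ℕ} (hf : IsIterEmbedding k s S E f) {v : α}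
    (hlt : f v < k ^ s) (hbelow : ∀ x ∈ S, x < v → f x < f v)
    (habove : ∀ y ∈ S, v < y → f v < f y) : IsIterEmbedding k s (insert v S) E f where
  strictMonoOn := by
    rw [Finset.coe_insert]
    rintro x (rfl | hx) y (rfl | hy) hxy
    · exact absurd hxy (lt_irrefl _)
    · exact habove y hy hxy
    · exact hbelow x hx hxy
    · exact hf.strictMonoOn hx hy hxy
  lt_pow := (Finset.forall_mem_insert ..).2 ⟨hlt, hf.lt_pow⟩
  splits := hf.splits

theorem IterEmbeds.insert (h : IterEmbeds k s S E) (hk : 1 < k) (hE : ∀ A ∈ E, A ⊆ S) {v : α}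
    (hv : v ∉ S) : IterEmbeds k (s + 1) (insert v S) E := by
  obtain ⟨f, hf⟩ := h
  have hk0 : 0 < k := Nat.zero_lt_of_lt hk
  have hdiv (n : ℕ) {i : ℕ} (hi : i < k) : (k * n + i) / k = n := by
    rw [Nat.mul_add_div hk0, Nat.div_eq_of_lt hi, add_zero]
  -- The new last digit is `0` before `v` and `1` after `v`; the label of `v` is the least one
  -- exceeding all labels before it.
  let d (x : α) : ℕ := if x < v then 0 else 1
  have hd (x : α) : d x < k := by
    unfold d
    split_ifs <;> assumption
  let a : ℕ := (S.filter (· < v)).sup fun x => k * f x + 1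
  let g : α → ℕ := Function.update (fun x => k * f x + d x) v a
  have hgv : g v = a := Function.update_self ..
  have hgS : ∀ x ∈ S, g x = k * f x + d x := fun x hx =>
    Function.update_of_ne (ne_of_mem_of_not_mem hx hv) ..
  have hg : IsIterEmbedding k (s + 1) S E g :=
    hf.of_div_eq hk0 hE fun x hx => hgS x hx ▸ hdiv (f x) (hd x)
  have hbelow : ∀ x ∈ S, x < v → g x < a := fun x hx hxv => by
    rw [hgS x hx, show d x = 0 from if_pos hxv]
    exact Finset.le_sup (f := fun x => k * f x + 1) (Finset.mem_filter.2 ⟨hx, hxv⟩)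
  have habove : ∀ y ∈ S, v < y → a < g y := fun y hy hvy => by
    rw [hgS y hy, show d y = 1 from if_neg hvy.not_gt, Nat.lt_succ_iff]
    refine Finset.sup_le fun x hx => ?_
    obtain ⟨hxS, hxv⟩ := Finset.mem_filter.1 hx
    calc k * f x + 1 ≤ k * (f x + 1) := by rw [mul_add_one]; omega
      _ ≤ k * f y := Nat.mul_le_mul_left k (hf.strictMonoOn hxS hy (hxv.trans hvy))
  have ha : a < k ^ (s + 1) := (Finset.sup_lt_iff (pow_pos hk0 _)).2 fun x hx =>
    (hf.of_div_eq hk0 hE fun x _ => hdiv (f x) hk).lt_pow x (Finset.mem_filter.1 hx).1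
  exact ⟨g, hg.insert (hgv ▸ ha) (hgv ▸ hbelow) (hgv ▸ habove)⟩

theorem IterEmbeds.union (h : IterEmbeds k s S E) (hk : 1 < k) (hE : ∀ A ∈ E, A ⊆ S)
    {T : Finset α} (hT : Disjoint T S) : IterEmbeds k (s + T.card) (T ∪ S) E := by
  induction T using Finset.induction_on with
  | empty => simpa using h
  | insert v T hv ih =>
    rw [Finset.disjoint_insert_left] at hT
    rw [Finset.card_insert_of_notMem hv, ← add_assoc, Finset.insert_union]
    exact (ih hT.2).insert hk (fun A hA => (hE A hA).trans Finset.subset_union_right)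
      (by simp [hv, hT.1])

theorem IterEmbeds.of_edges_empty (hk : 1 < k) (S : Finset α) :
    IterEmbeds k (S.card - 1) S ∅ := by
  rcases S.eq_empty_or_nonempty with rfl | ⟨v, hv⟩
  · exact ⟨fun _ => 0, by simp [StrictMonoOn], by simp, by simp⟩
  · have hsingle : IterEmbeds k 0 {v} ∅ := ⟨fun _ => 0, by simp, by simp, by simp⟩
    have := hsingle.union hk (by simp) (Finset.disjoint_singleton_right.2 (S.notMem_erase v))
    rwa [Finset.union_comm, ← Finset.insert_eq, Finset.insert_erase hv,
      Finset.card_erase_of_mem hv, zero_add] at this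

theorem IterEmbeds.glue {I : Fin k → Finset α}
    (hord : ∀ i j, i < j → ∀ x ∈ I i, ∀ y ∈ I j, x < y)
    (hsub : ∀ A ∈ E, A ⊆ Finset.univ.biUnion I)
    (hedges : ∀ A ∈ E, (∃ j, A ⊆ I j) ∨ ∀ j, (A ∩ I j).card = 1)
    (h : ∀ j, IterEmbeds k s (I j) (E.filter (· ⊆ I j))) :
    IterEmbeds k (s + 1) (Finset.univ.biUnion I) E := by
  choose f hf using h
  obtain ⟨F, hF⟩ : ∃ F : α → ℕ, ∀ j, ∀ x ∈ I j, F x = f j x + j * k ^ s :=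
    exists_forall_mem_eq_of_pairwise_disjoint (pairwise_disjoint_of_forall_lt hord) _
  have hpos (j : Fin k) : 0 < k ^ s := pow_pos j.pos s
  have hdiv : ∀ j, ∀ x ∈ I j, F x / k ^ s = j := fun j x hx => by
    rw [hF j x hx, Nat.add_mul_div_right _ _ (hpos j), Nat.div_eq_of_lt ((hf j).lt_pow x hx),
      zero_add]
  have hmod : ∀ j, ∀ x ∈ I j, F x % k ^ s = f j x % k ^ s := fun j x hx => by
    rw [hF j x hx, Nat.add_mul_mod_self_right]
  have hcover : ∀ x ∈ Finset.univ.biUnion I, ∃ j, x ∈ I j := fun x hx => by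
    simpa using hx
  refine ⟨F, fun x hx y hy hxy => ?_, fun x hx => ?_, fun A hA => ?_⟩
  · obtain ⟨i, hi⟩ := hcover x hx
    obtain ⟨j, hj⟩ := hcover y hy
    rcases lt_trichotomy i j with hij | rfl | hji
    · refine Nat.lt_of_div_lt_div (c := k ^ s) ?_
      rwa [hdiv i x hi, hdiv j y hj]
    · rw [hF i x hi, hF i y hj]
      exact Nat.add_lt_add_right ((hf i).strictMonoOn hi hj hxy) _
    · exact absurd hxy (hord j i hji y hj x hi).not_gt
  · obtain ⟨j, hj⟩ := hcover x hx
    rw [pow_succ', ← Nat.div_lt_iff_lt_mul (hpos j), hdiv j x hj]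
    exact j.isLt
  · rcases hedges A hA with ⟨j, hj⟩ | hcard
    · obtain ⟨t, ht, hsplit⟩ := (hf j).splits A (Finset.mem_filter.2 ⟨hA, hj⟩)
      refine ⟨t, ht.trans s.lt_succ_self, hsplit.of_mod_eq ht (fun x hx => hmod j x (hj hx)) ?_⟩
      exact fun x hx y hy => (hdiv j x (hj hx)).trans (hdiv j y (hj hy)).symm
    · exact ⟨s, s.lt_succ_self, splitsAt_of_card_inter_eq_one hdiv (hsub A hA) hcard⟩

end IterEmbeddingConstructions

theorem exists_strictMono_eqOn_succ {f : ℕ → ℕ} {n : ℕ} (hf : StrictMonoOn f (Set.Icc 1 n)) :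
    ∃ F : ℕ → ℕ, StrictMono F ∧ ∀ x ∈ Finset.Icc 1 n, F x = f x + 1 := by
  refine ⟨fun x => if x = 0 then 0 else f (min x n) + 1 + (x - n),
    strictMono_nat_of_lt_succ fun x => ?_, fun x hx => ?_⟩
  · rcases eq_or_ne x 0 with rfl | hx
    · simp
    rcases lt_or_ge x n with hxn | hxn
    · have hstep := hf ⟨Nat.one_le_iff_ne_zero.2 hx, hxn.le⟩ ⟨x.succ_pos, hxn⟩ x.lt_succ_self
      simpa [hx, hxn.le, Nat.succ_le_of_lt hxn, Nat.sub_eq_zero_of_le] using hstep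
    · simp only [hx, if_false, Nat.succ_ne_zero, min_eq_right hxn,
        min_eq_right (hxn.trans x.le_succ)]
      omega
  · obtain ⟨hx1, hxn⟩ := Finset.mem_Icc.1 hx
    simp [Nat.one_le_iff_ne_zero.1 hx1, hxn]

theorem IterEmbeds.contains {k s : ℕ} {M : OrderedHypergraph} (hk : 0 < k)
    (hM : ∀ A ∈ M.edges, A ⊆ Finset.Icc 1 M.n)
    (h : IterEmbeds k s (Finset.Icc 1 M.n) M.edges) : (iterGraph k s).Contains M := by
  obtain ⟨f, hf⟩ := h
  obtain ⟨F, hFmono, hF⟩ := exists_strictMono_eqOn_succ (Finset.coe_Icc 1 M.n ▸ hf.strictMonoOn)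
  refine ⟨F, hFmono, fun v hv => ?_, fun A hA => ?_⟩
  · rw [hF v hv, iterGraph_n]
    exact Finset.mem_Icc.2 ⟨Nat.succ_pos _, hf.lt_pow v hv⟩
  · obtain ⟨t, ht, hsplit⟩ := hf.splits A hA
    rw [Finset.image_congr fun x hx => hF x (hM A hA hx)]
    exact hsplit.image_succ_mem_edges_iterGraph hk ht fun x hx => hf.lt_pow x (hM A hA hx)

section KNestable

variable {k : ℕ} {E : Finset (Finset ℕ)}

theorem mem_edgeSupport {x : ℕ} : x ∈ edgeSupport E ↔ ∃ A ∈ E, x ∈ A := by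
  simp [edgeSupport, Finset.mem_sup]

theorem subset_edgeSupport {A : Finset ℕ} (hA : A ∈ E) : A ⊆ edgeSupport E :=
  Finset.le_sup (f := id) hA

theorem edgeSupport_filter_subset (J : Finset ℕ) : edgeSupport (E.filter (· ⊆ J)) ⊆ J :=
  Finset.sup_le fun _ hA => (Finset.mem_filter.1 hA).2

theorem KNestable.empty_notMem (h : KNestable k E) : ∅ ∉ E := by
  induction h with
  | empty => exact Finset.notMem_empty _
  | nest E hk I _ _ _ _ _ _ _ ih =>
    exact fun hE => ih ⟨0, hk⟩ (Finset.mem_filter.2 ⟨hE, Finset.empty_subset _⟩)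

theorem KNestable.one_lt (h : KNestable k E) (hE : E.Nonempty) : 1 < k := by
  induction h with
  | empty => exact absurd hE Finset.not_nonempty_empty
  | nest E hk I _ hspan _ _ _ _ _ ih =>
    by_contra hk1
    obtain rfl : k = 1 := by omega
    have hI : edgeSupport E = I 0 := by simp [hspan]
    refine hk1 (ih 0 ?_)
    rwa [Finset.filter_true_of_mem fun A hA => hI ▸ subset_edgeSupport hA]

theorem filter_subset_ssubset {J : Finset ℕ} {x : ℕ} (hx : x ∈ edgeSupport E) (hxJ : x ∉ J) :
    E.filter (· ⊆ J) ⊂ E := by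
  obtain ⟨A, hA, hxA⟩ := mem_edgeSupport.1 hx
  exact Finset.filter_ssubset.2 ⟨A, hA, fun hAJ => hxJ (hAJ hxA)⟩

theorem card_sdiff_edgeSupport_add_card_filter_le {J : Finset ℕ} (hJ : J ⊆ edgeSupport E)
    (hcard : ∀ A ∈ E, A ⊆ J ∨ (A ∩ J).card ≤ 1) :
    (J \ edgeSupport (E.filter (· ⊆ J))).card + (E.filter (· ⊆ J)).card ≤ E.card := by
  have hcross : J \ edgeSupport (E.filter (· ⊆ J)) ⊆
      (E.filter (¬ · ⊆ J)).biUnion (· ∩ J) := fun x hx => by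
    obtain ⟨hxJ, hxE⟩ := Finset.mem_sdiff.1 hx
    obtain ⟨A, hA, hxA⟩ := mem_edgeSupport.1 (hJ hxJ)
    have hAJ : ¬ A ⊆ J := fun hAJ =>
      hxE (subset_edgeSupport (Finset.mem_filter.2 ⟨hA, hAJ⟩) hxA)
    exact Finset.mem_biUnion.2
      ⟨A, Finset.mem_filter.2 ⟨hA, hAJ⟩, Finset.mem_inter.2 ⟨hxA, hxJ⟩⟩
  have hle : (J \ edgeSupport (E.filter (· ⊆ J))).card ≤ (E.filter (¬ · ⊆ J)).card * 1 :=
    (Finset.card_le_card hcross).trans <| Finset.card_biUnion_le_card_mul _ _ _ fun A hA =>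
      (hcard A (Finset.mem_filter.1 hA).1).resolve_left (Finset.mem_filter.1 hA).2
  have := E.card_filter_add_card_filter_not (· ⊆ J)
  omega

theorem IterEmbeds.of_filter_subset {J : Finset ℕ} (hk : 1 < k) (hJ : J ⊆ edgeSupport E)
    (hcard : ∀ A ∈ E, A ⊆ J ∨ (A ∩ J).card ≤ 1) (hssub : E.filter (· ⊆ J) ⊂ E)
    (h : (E.filter (· ⊆ J)).Nonempty → IterEmbeds k (2 * (E.filter (· ⊆ J)).card - 1)
      (edgeSupport (E.filter (· ⊆ J))) (E.filter (· ⊆ J))) :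
    IterEmbeds k (2 * E.card - 2) J (E.filter (· ⊆ J)) := by
  have hle := card_sdiff_edgeSupport_add_card_filter_le hJ hcard
  have hlt := Finset.card_lt_card hssub
  rcases (E.filter (· ⊆ J)).eq_empty_or_nonempty with hempty | hne
  · rw [hempty] at hle ⊢
    refine (IterEmbeds.of_edges_empty hk J).mono (by omega) ?_
    have : J.card ≤ E.card := by simpa [edgeSupport] using hle
    omega
  · have hunion := (h hne).union hk (fun A => subset_edgeSupport)
      (Finset.sdiff_disjoint (t := J))
    rw [Finset.sdiff_union_of_subset (edgeSupport_filter_subset J)] at hunion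
    refine hunion.mono (by omega) ?_
    have := hne.card_pos
    omega

theorem KNestable.iterEmbeds (h : KNestable k E) (hE : E.Nonempty) :
    IterEmbeds k (2 * E.card - 1) (edgeSupport E) E := by
  have hk1 := h.one_lt hE
  have hempty := h.empty_notMem
  induction h with
  | empty => exact absurd hE Finset.not_nonempty_empty
  | nest E hk I hord hspan _ hfirst hlast hedges _ ih =>
    have hdisj := pairwise_disjoint_of_forall_lt hord
    have hsub (i) : I i ⊆ edgeSupport E :=
      hspan ▸ Finset.subset_biUnion_of_mem I (Finset.mem_univ i)
    have houtside (j) : ∃ x ∈ edgeSupport E, x ∉ I j := by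
      obtain ⟨A, hA⟩ := hE
      obtain ⟨x, hx⟩ := Finset.nonempty_iff_ne_empty.2 (ne_of_mem_of_not_mem hA hempty)
      obtain ⟨y, hy, -⟩ := hfirst x (subset_edgeSupport hA hx)
      obtain ⟨z, hz, -⟩ := hlast x (subset_edgeSupport hA hx)
      by_cases hj : ⟨0, hk⟩ = j
      · have hne : j ≠ ⟨k - 1, Nat.sub_lt hk Nat.one_pos⟩ :=
          hj ▸ Fin.ne_of_val_ne (Nat.sub_pos_of_lt hk1).ne
        exact ⟨z, hsub _ hz, Finset.disjoint_right.1 (hdisj hne) hz⟩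
      · exact ⟨y, hsub _ hy, Finset.disjoint_left.1 (hdisj hj) hy⟩
    have hinterval (j) : IterEmbeds k (2 * E.card - 2) (I j) (E.filter (· ⊆ I j)) := by
      obtain ⟨x, hx, hxj⟩ := houtside j
      exact .of_filter_subset hk1 (hsub j)
        (fun A hA => subset_or_card_inter_le_one hdisj (hedges A hA) j)
        (filter_subset_ssubset hx hxj)
        fun hne => ih j hne fun hmem => hempty (Finset.mem_filter.1 hmem).1
    have hlevel : 2 * E.card - 1 = 2 * E.card - 2 + 1 := by
      have := hE.card_pos
      omega
    rw [hspan, hlevel]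
    exact .glue hord (fun A hA => hspan ▸ subset_edgeSupport hA) hedges hinterval

end KNestable

theorem nestable_matching_in_iterGraph_general {k : ℕ} {M : OrderedHypergraph}
    (hE : M.edges.Nonempty) (hsupp : edgeSupport M.edges = Finset.Icc 1 M.n)
    (hnest : KNestable k M.edges) :
    (iterGraph k (2 * M.edges.card - 1)).Contains M :=
  IterEmbeds.contains (Nat.zero_lt_of_lt (hnest.one_lt hE))
    (fun _ hA => hsupp ▸ subset_edgeSupport hA) (hsupp ▸ hnest.iterEmbeds hE)

/-- For `k ≥ 3`, a `k`-nestable ordered `k`-uniform matching `M` with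
`e ≥ 1` edges (on vertex set `{1, …, ke}`, which its edges partition) is contained in
`G_{2e-1}^k`. -/
theorem nestable_matching_in_iterGraph (k e : ℕ) (hk : 3 ≤ k) (he : 1 ≤ e)
    (M : OrderedHypergraph) (hn : M.n = k * e) (hecard : M.edges.card = e)
    (huniform : ∀ A ∈ M.edges, A.card = k)
    (hdisj : ∀ A ∈ M.edges, ∀ B ∈ M.edges, A ≠ B → Disjoint A B)
    (hsupp : edgeSupport M.edges = Finset.Icc 1 (k * e))
    (hnest : KNestable k M.edges) :
    (iterGraph k (2 * e - 1)).Contains M := by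
  subst hecard
  exact nestable_matching_in_iterGraph_general (Finset.card_pos.1 he) (hn ▸ hsupp) hnest
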